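/- arXiv:1510.03267 — 2 statements merged into one kernel-verified Lean document; each statement's English description precedes it below -/
import Mathlib

section
/- Let P be a Borel probability measure on X×Y, let L be a convex and locally separately Lipschitz continuous pairwise loss function with R_{L,P}(0) < ∞, and let H be the RKHS of a bounded measurable kernel over X. Then for every λ > 0 there exists a minimizer f_{L,P,λ} ∈ H of the regularized risk f ↦ R_{L,P}(f) + λ‖f‖_H². -/
open MeasureTheory
open scoped RealInnerProductSpace

/-!
The regularized risk is lower semicontinuous by Fatou's lemma, since a finite convex loss is
continuous in its two real arguments. By convexity of the risk and the parallelogram identity, its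
value at the midpoint of `f` and `g` lies below the average of its values at `f` and `g` by at least
`λ‖f - g‖² / 4`. So two points whose values are both close to the infimum are close to each other:
the filter of near-minimizers is Cauchy, and by lower semicontinuity its limit is a minimizer.
-/

open Filter Set Topology
open scoped ENNReal NNReal

section Minimization

theorem exists_forall_le_of_cauchy_comap_nhds_iInf {α β : Type*} [UniformSpace α]
    [CompleteSpace α] [CompleteLinearOrder β] [DenselyOrdered β] [TopologicalSpace β]
    [OrderTopology β] {φ : α → β} (hφ : LowerSemicontinuous φ)
    (hcauchy : Cauchy (comap φ (𝓝 (⨅ x, φ x)))) : ∃ x, ∀ y, φ x ≤ φ y := by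
  obtain ⟨x, hx⟩ := CompleteSpace.complete hcauchy
  suffices hle : φ x ≤ ⨅ y, φ y from ⟨x, fun y => hle.trans (iInf_le φ y)⟩
  by_contra! hlt
  obtain ⟨r, hr_inf, hr_x⟩ := exists_between hlt
  have : NeBot (comap φ (𝓝 (⨅ x, φ x))) := hcauchy.1
  have h_gt : ∀ᶠ y in comap φ (𝓝 (⨅ x, φ x)), r < φ y := (hφ x r hr_x).filter_mono hx
  have h_lt : ∀ᶠ y in comap φ (𝓝 (⨅ x, φ x)), φ y < r :=
    tendsto_comap.eventually (gt_mem_nhds hr_inf)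
  obtain ⟨y, hy_gt, hy_lt⟩ := (h_gt.and h_lt).exists
  exact lt_asymm hy_gt hy_lt

theorem exists_forall_le_of_iInf_add_edist_sq_le {α : Type*} [PseudoEMetricSpace α]
    [CompleteSpace α] [Nonempty α] {φ : α → ℝ≥0∞} (hφ : LowerSemicontinuous φ)
    {c : ℝ≥0∞} (hc : c ≠ 0)
    (h : ∀ x y, (⨅ z, φ z) + c * edist x y ^ 2 ≤ (φ x + φ y) / 2) :
    ∃ x, ∀ y, φ x ≤ φ y := by
  rcases eq_or_ne (⨅ z, φ z) ⊤ with htop | htop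
  · exact ‹Nonempty α›.elim fun x => ⟨x, fun y => le_top.trans_eq (iInf_eq_top.1 htop y).symm⟩
  refine exists_forall_le_of_cauchy_comap_nhds_iInf hφ (EMetric.cauchy_iff.2 ⟨?_, fun ε hε => ?_⟩)
  · rw [← neBot_iff, comap_neBot_iff_frequently]
    exact mem_closure_iff_frequently.1 (sInf_mem_closure (range_nonempty φ))
  · have hδ : c * ε ^ 2 ≠ 0 := mul_ne_zero hc (pow_ne_zero 2 hε.ne')
    refine ⟨{x | φ x < (⨅ z, φ z) + c * ε ^ 2},
      preimage_mem_comap (gt_mem_nhds (ENNReal.lt_add_right htop hδ)), fun x hx y hy => ?_⟩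
    have hsum : (⨅ z, φ z) + c * edist x y ^ 2 < (⨅ z, φ z) + c * ε ^ 2 := by
      refine (h x y).trans_lt (ENNReal.div_lt_of_lt_mul ?_)
      rw [mul_two]
      exact ENNReal.add_lt_add hx hy
    contrapose! hsum
    gcongr

theorem enorm_midpoint_sq_add_edist_sq_div_four {H : Type*} [SeminormedAddCommGroup H]
    [InnerProductSpace ℝ H] (x y : H) :
    ‖midpoint ℝ x y‖ₑ ^ 2 + edist x y ^ 2 / 4 = (‖x‖ₑ ^ 2 + ‖y‖ₑ ^ 2) / 2 := by
  have hreal : ‖midpoint ℝ x y‖ ^ 2 + dist x y ^ 2 / 4 = (‖x‖ ^ 2 + ‖y‖ ^ 2) / 2 := by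
    rw [midpoint_eq_smul_add, norm_smul, dist_eq_norm, invOf_eq_inv, norm_inv, Real.norm_ofNat]
    linear_combination parallelogram_law_with_norm ℝ x y / 4
  have := congrArg ENNReal.ofReal hreal
  rw [ENNReal.ofReal_add (by positivity) (by positivity),
    ENNReal.ofReal_div_of_pos (by norm_num), ENNReal.ofReal_div_of_pos (by norm_num),
    ENNReal.ofReal_add (by positivity) (by positivity)] at this
  simpa [ENNReal.ofReal_pow, edist_dist] using this

theorem exists_forall_add_mul_enorm_sq_le {H : Type*} [SeminormedAddCommGroup H]
    [InnerProductSpace ℝ H] [CompleteSpace H] {R : H → ℝ≥0∞} (hR : LowerSemicontinuous R)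
    (hconv : ConvexOn ℝ≥0 univ R) {c : ℝ≥0∞} (hc₀ : c ≠ 0) (hc : c ≠ ⊤) :
    ∃ f, ∀ g, R f + c * ‖f‖ₑ ^ 2 ≤ R g + c * ‖g‖ₑ ^ 2 := by
  have hmid (f g : H) : R (midpoint ℝ f g) ≤ (R f + R g) / 2 := by
    have := hconv.2 (mem_univ f) (mem_univ g) zero_le zero_le (add_halves (1 : ℝ≥0))
    simpa [midpoint_eq_smul_add, smul_add, mul_add, NNReal.smul_def, ENNReal.smul_def,
      ENNReal.div_eq_inv_mul] using this
  have hpenalty : Continuous fun f : H => c * ‖f‖ₑ ^ 2 :=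
    (ENNReal.continuous_const_mul hc).comp ((ENNReal.continuous_pow 2).comp continuous_enorm)
  refine exists_forall_le_of_iInf_add_edist_sq_le (hR.add hpenalty.lowerSemicontinuous)
    (c := c / 4) (by simp [hc₀]) fun f g => ?_
  calc (⨅ x, R x + c * ‖x‖ₑ ^ 2) + c / 4 * edist f g ^ 2
      ≤ R (midpoint ℝ f g) + c * ‖midpoint ℝ f g‖ₑ ^ 2 + c / 4 * edist f g ^ 2 := by
        gcongr
        exact iInf_le _ _
    _ = R (midpoint ℝ f g) + c * (‖midpoint ℝ f g‖ₑ ^ 2 + edist f g ^ 2 / 4) := by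
        simp only [div_eq_mul_inv]; ring
    _ ≤ (R f + R g) / 2 + c * ((‖f‖ₑ ^ 2 + ‖g‖ₑ ^ 2) / 2) := by
        rw [enorm_midpoint_sq_add_edist_sq_div_four]
        gcongr
        exact hmid f g
    _ = (R f + c * ‖f‖ₑ ^ 2 + (R g + c * ‖g‖ₑ ^ 2)) / 2 := by
        simp only [div_eq_mul_inv]; ring

end Minimization

section IntegralFunctional

variable {E Z : Type*} [MeasurableSpace Z] {μ : Measure Z} {F : E → Z → ℝ≥0∞}

theorem lowerSemicontinuous_lintegral [TopologicalSpace E] [FirstCountableTopology E]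
    (hmeas : ∀ f, AEMeasurable (F f) μ)
    (hF : ∀ᵐ z ∂μ, LowerSemicontinuous fun f => F f z) :
    LowerSemicontinuous fun f => ∫⁻ z, F f z ∂μ :=
  lowerSemicontinuous_iff_le_liminf.2 fun f =>
    (lintegral_mono_ae (hF.mono fun _ hz => hz.le_liminf f)).trans (lintegral_liminf_le' hmeas)

theorem convexOn_lintegral [AddCommMonoid E] [SMul ℝ≥0 E] {s : Set E} (hs : Convex ℝ≥0 s)
    (hmeas : ∀ f ∈ s, AEMeasurable (F f) μ)
    (hF : ∀ᵐ z ∂μ, ConvexOn ℝ≥0 s fun f => F f z) :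
    ConvexOn ℝ≥0 s fun f => ∫⁻ z, F f z ∂μ := by
  refine ⟨hs, fun f hf g hg a b ha hb hab => ?_⟩
  calc ∫⁻ z, F (a • f + b • g) z ∂μ
      ≤ ∫⁻ z, a • F f z + b • F g z ∂μ :=
        lintegral_mono_ae (hF.mono fun z hz => hz.2 hf hg ha hb hab)
    _ = a • ∫⁻ z, F f z ∂μ + b • ∫⁻ z, F g z ∂μ := by
        rw [lintegral_add_left' (f := fun z => a • F f z) ((hmeas f hf).const_smul a)]
        simp only [ENNReal.smul_def, smul_eq_mul, lintegral_const_mul' _ _ ENNReal.coe_ne_top]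

end IntegralFunctional

theorem convexOn_ennreal_ofReal {E : Type*} [AddCommMonoid E] [Module ℝ E] {s : Set E}
    {f : E → ℝ} (hf : ConvexOn ℝ s f) : ConvexOn ℝ≥0 s fun x => ENNReal.ofReal (f x) := by
  refine ⟨fun x hx y hy a b ha hb hab => hf.1 hx hy ha hb (by exact_mod_cast hab),
    fun x hx y hy a b ha hb hab => ?_⟩
  calc ENNReal.ofReal (f (a • x + b • y))
      ≤ ENNReal.ofReal (a * f x + b * f y) :=
        ENNReal.ofReal_le_ofReal (hf.2 hx hy ha hb (by exact_mod_cast hab))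
    _ ≤ ENNReal.ofReal (a * f x) + ENNReal.ofReal (b * f y) := ENNReal.ofReal_add_le
    _ = a • ENNReal.ofReal (f x) + b • ENNReal.ofReal (f y) := by
        simp [ENNReal.ofReal_mul, ENNReal.smul_def]

section PairwiseRisk

variable {X Y : Type*} [MeasurableSpace X] [MeasurableSpace Y]

/-- The `L`-risk of a predictor `f` under a pairwise loss `L`. The loss may take the value `∞`, and
the law `μ` of a pair of observations need not be a product: the risk `R_{L,P}(f)` of the paper is
the case `μ = P ⊗ P`. -/
noncomputable def pairwiseRisk (L : X → Y → X → Y → ℝ → ℝ → ℝ≥0∞)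
    (μ : Measure ((X × Y) × (X × Y))) (f : X → ℝ) : ℝ≥0∞ :=
  ∫⁻ z, L z.1.1 z.1.2 z.2.1 z.2.2 (f z.1.1) (f z.2.1) ∂μ

variable {L : X → Y → X → Y → ℝ → ℝ → ℝ≥0∞} {μ : Measure ((X × Y) × (X × Y))}

theorem measurable_pairwiseLoss
    (hL : Measurable fun p : (X × Y) × (X × Y) × ℝ × ℝ =>
      L p.1.1 p.1.2 p.2.1.1 p.2.1.2 p.2.2.1 p.2.2.2) {f : X → ℝ} (hf : Measurable f) :
    Measurable fun z : (X × Y) × (X × Y) => L z.1.1 z.1.2 z.2.1 z.2.2 (f z.1.1) (f z.2.1) :=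
  hL.comp (f := fun z : (X × Y) × (X × Y) => (z.1, z.2, f z.1.1, f z.2.1)) (by fun_prop)

variable {H : Type*} [SeminormedAddCommGroup H] [InnerProductSpace ℝ H] {Φ : X → H}

theorem lowerSemicontinuous_pairwiseRisk_inner
    (hL : Measurable fun p : (X × Y) × (X × Y) × ℝ × ℝ =>
      L p.1.1 p.1.2 p.2.1.1 p.2.1.2 p.2.2.1 p.2.2.2)
    (hlsc : ∀ x y x' y', LowerSemicontinuous fun t : ℝ × ℝ => L x y x' y' t.1 t.2)
    (hΦ : ∀ f : H, Measurable fun x => ⟪f, Φ x⟫) :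
    LowerSemicontinuous fun f : H => pairwiseRisk L μ fun x => ⟪f, Φ x⟫ :=
  lowerSemicontinuous_lintegral
    (fun f => (measurable_pairwiseLoss hL (hΦ f)).aemeasurable) <|
    .of_forall fun z => (hlsc z.1.1 z.1.2 z.2.1 z.2.2).comp
      (g := fun f : H => (⟪f, Φ z.1.1⟫, ⟪f, Φ z.2.1⟫)) (by fun_prop)

theorem convexOn_pairwiseRisk_inner
    (hL : Measurable fun p : (X × Y) × (X × Y) × ℝ × ℝ =>
      L p.1.1 p.1.2 p.2.1.1 p.2.1.2 p.2.2.1 p.2.2.2)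
    (hconv : ∀ x y x' y', ConvexOn ℝ≥0 univ fun t : ℝ × ℝ => L x y x' y' t.1 t.2)
    (hΦ : ∀ f : H, Measurable fun x => ⟪f, Φ x⟫) :
    ConvexOn ℝ≥0 univ fun f : H => pairwiseRisk L μ fun x => ⟪f, Φ x⟫ :=
  convexOn_lintegral convex_univ
    (fun f _ => (measurable_pairwiseLoss hL (hΦ f)).aemeasurable) <|
    .of_forall fun z => (hconv z.1.1 z.1.2 z.2.1 z.2.2).comp_linearMap
      ((((innerₗ H).flip (Φ z.1.1)).prod ((innerₗ H).flip (Φ z.2.1))).restrictScalars ℝ≥0)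

end PairwiseRisk

theorem rpl_exists_minimizer_convex_locallyLipschitz_general
    {X Y : Type*} [MeasurableSpace X] [MeasurableSpace Y]
    {L : X → Y → X → Y → ℝ → ℝ → ℝ≥0∞}
    (hL_meas : Measurable fun p : (X × Y) × (X × Y) × ℝ × ℝ =>
      L p.1.1 p.1.2 p.2.1.1 p.2.1.2 p.2.2.1 p.2.2.2)
    (hL_lsc : ∀ x y x' y', LowerSemicontinuous fun t : ℝ × ℝ => L x y x' y' t.1 t.2)
    (hL_convex : ∀ x y x' y', ConvexOn ℝ≥0 univ fun t : ℝ × ℝ => L x y x' y' t.1 t.2)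
    {H : Type*} [SeminormedAddCommGroup H] [InnerProductSpace ℝ H] [CompleteSpace H]
    {Φ : X → H} (hΦ : ∀ f : H, Measurable fun x => ⟪f, Φ x⟫)
    (μ : Measure ((X × Y) × (X × Y))) {l : ℝ} (hl : 0 < l) :
    ∃ fmin : H, ∀ g : H,
      pairwiseRisk L μ (fun x => ⟪fmin, Φ x⟫) + ENNReal.ofReal (l * ‖fmin‖ ^ 2)
        ≤ pairwiseRisk L μ (fun x => ⟪g, Φ x⟫) + ENNReal.ofReal (l * ‖g‖ ^ 2) := by
  simpa only [ENNReal.ofReal_mul hl.le, ENNReal.ofReal_pow (norm_nonneg _), ofReal_norm] using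
    exists_forall_add_mul_enorm_sq_le (lowerSemicontinuous_pairwiseRisk_inner hL_meas hL_lsc hΦ)
      (convexOn_pairwiseRisk_inner (μ := μ) hL_meas hL_convex hΦ)
      (ENNReal.ofReal_pos.2 hl).ne' ENNReal.ofReal_ne_top

/-- **Existence for convex, locally separately Lipschitz losses.** If `L` is a convex and
locally separately Lipschitz continuous pairwise loss with `R_{L,P}(0) < ∞`, and `H` is the
RKHS of a bounded measurable kernel (feature map `Φ`, `‖Φ x‖ ≤ κ`, `f(x) = ⟪f, Φ x⟫`), then
for every `λ > 0` there exists a minimizer of `f ↦ R_{L,P}(f) + λ‖f‖²_H` over `H`. -/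
theorem rpl_exists_minimizer_convex_locallyLipschitz
    {X : Type*} [MeasurableSpace X] {Y : Set ℝ} (hY : IsClosed Y)
    (L : X → Y → X → Y → ℝ → ℝ → ℝ)
    (hL_nonneg : ∀ x y x' y' t t', 0 ≤ L x y x' y' t t')
    (hL_meas : Measurable fun p : (X × Y) × (X × Y) × ℝ × ℝ =>
      L p.1.1 p.1.2 p.2.1.1 p.2.1.2 p.2.2.1 p.2.2.2)
    (hL_convex : ∀ x y x' y',
      ConvexOn ℝ Set.univ fun t : ℝ × ℝ => L x y x' y' t.1 t.2)
    (c : ℝ → ℝ)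
    (hc_nonneg : ∀ b, 0 ≤ b → 0 ≤ c b)
    (hLip : ∀ b, 0 ≤ b → ∀ t₁ t₂ s₁ s₂ : ℝ, |t₁| ≤ b → |t₂| ≤ b → |s₁| ≤ b → |s₂| ≤ b →
      ∀ x y x' y',
        |L x y x' y' t₁ t₂ - L x y x' y' s₁ s₂| ≤ c b * (|t₁ - s₁| + |t₂ - s₂|))
    {H : Type*} [NormedAddCommGroup H] [InnerProductSpace ℝ H] [CompleteSpace H]
    (Φ : X → H) (κ : ℝ) (hκ : ∀ x, ‖Φ x‖ ≤ κ)
    (hΦmeas : ∀ f : H, Measurable fun x => ⟪f, Φ x⟫)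
    (P : Measure (X × Y)) [IsProbabilityMeasure P]
    (hR0 : (∫⁻ z : (X × Y) × (X × Y), ENNReal.ofReal
        (L z.1.1 z.1.2 z.2.1 z.2.2 0 0) ∂(P.prod P)) < ⊤)
    (l : ℝ) (hl : 0 < l) :
    ∃ fmin : H, ∀ g : H,
      (∫⁻ z : (X × Y) × (X × Y), ENNReal.ofReal
          (L z.1.1 z.1.2 z.2.1 z.2.2 ⟪fmin, Φ z.1.1⟫ ⟪fmin, Φ z.2.1⟫) ∂(P.prod P))
        + ENNReal.ofReal (l * ‖fmin‖ ^ 2)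
      ≤ (∫⁻ z : (X × Y) × (X × Y), ENNReal.ofReal
          (L z.1.1 z.1.2 z.2.1 z.2.2 ⟪g, Φ z.1.1⟫ ⟪g, Φ z.2.1⟫) ∂(P.prod P))
        + ENNReal.ofReal (l * ‖g‖ ^ 2) :=
  rpl_exists_minimizer_convex_locallyLipschitz_general
    (L := fun x y x' y' t t' => ENNReal.ofReal (L x y x' y' t t')) hL_meas.ennreal_ofReal
    (fun x y x' y' => (ENNReal.continuous_ofReal.comp
      (hL_convex x y x' y').locallyLipschitz.continuous).lowerSemicontinuous)
    (fun x y x' y' => convexOn_ennreal_ofReal (hL_convex x y x' y')) hΦmeas (P.prod P) hl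
end

section
/- Let X be a complete separable metric space, Y ⊆ ℝ closed, k a continuous bounded kernel on X with RKHS H, and L a pairwise loss function that is separately Lipschitz continuous, differentiable in its last two arguments with continuous, uniformly bounded partial derivatives D₅L, D₆L (and bounded continuous second-order partials), and satisfies L(x,y,x,y,t,t) = 0. Let λ > 0, P a Borel probability measure on X×Y, and let f_{L★,P,λ} ∈ H be any minimizer of f ↦ R_{L★,P}(f) + λ‖f‖_H². Then for every g ∈ H: ∫ [ D₅L(x,y,x̃,ỹ,f_{L★,P,λ}(x),f_{L★,P,λ}(x̃))·g(x) + D₆L(x,y,x̃,ỹ,f_{L★,P,λ}(x),f_{L★,P,λ}(x̃))·g(x̃) ] dP²((x,y),(x̃,ỹ)) + 2λ·⟨f_{L★,P,λ}, g⟩_H = 0. -/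
open MeasureTheory
open scoped RealInnerProductSpace

/-- The shifted risk `R_{L★,P}(f)` of the function `x ↦ ⟪f, Φ x⟫` induced by `f ∈ H`. -/
noncomputable def shiftedRisk {X : Type*} [MeasurableSpace X] {Y : Set ℝ}
    {H : Type*} [NormedAddCommGroup H] [InnerProductSpace ℝ H]
    (L : X → Y → X → Y → ℝ → ℝ → ℝ) (Φ : X → H)
    (P : Measure (X × Y)) (f : H) : ℝ :=
  ∫ z : (X × Y) × (X × Y),
    (L z.1.1 z.1.2 z.2.1 z.2.2 ⟪f, Φ z.1.1⟫ ⟪f, Φ z.2.1⟫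
      - L z.1.1 z.1.2 z.2.1 z.2.2 0 0) ∂(P.prod P)

/-!
Each summand of the regularized risk has an explicit derivative along every line through `f`. For
the risk this is differentiation under the integral sign: the integrand is Lipschitz in `f` with
the `P²`-integrable constant `|L|₁ (‖Φ x‖ + ‖Φ x̃‖)`, because `f ↦ f(x) = ⟪f, Φ x⟫` is
`‖Φ x‖`-Lipschitz. Line derivatives vanish at a minimizer.
-/

section LineDeriv

variable {Z E G : Type*} [MeasurableSpace Z] {μ : Measure Z}
  [NormedAddCommGroup E] [NormedSpace ℝ E] [NormedAddCommGroup G] [NormedSpace ℝ G]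
  {F : E → Z → G} {F' : Z → G} {f g : E}

lemma aestronglyMeasurable_of_hasLineDerivAt
    (hF_meas : ∀ f, AEStronglyMeasurable (F f) μ)
    (hF_deriv : ∀ z, HasLineDerivAt ℝ (F · z) (F' z) f g) :
    AEStronglyMeasurable F' μ :=
  aestronglyMeasurable_of_tendsto_ae (nhdsWithin (0 : ℝ) (Set.Ioi 0))
    (f := fun t z => t⁻¹ • (F (f + t • g) z - F f z))
    (fun t => ((hF_meas _).sub (hF_meas _)).const_smul t⁻¹)
    (ae_of_all μ fun z => (hF_deriv z).tendsto_slope_zero_right)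

lemma hasLineDerivAt_integral_of_lipschitz {C : Z → ℝ}
    (hF_meas : ∀ f, AEStronglyMeasurable (F f) μ) (hF_int : Integrable (F f) μ)
    (hC_int : Integrable C μ) (hF_lip : ∀ z f₁ f₂, ‖F f₁ z - F f₂ z‖ ≤ C z * ‖f₁ - f₂‖)
    (hF_deriv : ∀ z, HasLineDerivAt ℝ (F · z) (F' z) f g) :
    HasLineDerivAt ℝ (fun f => ∫ z, F f z ∂μ) (∫ z, F' z ∂μ) f g := by
  have lipschitz_on_line (z : Z) : LipschitzOnWith (Real.nnabs (C z * ‖g‖))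
      (fun t : ℝ => F (f + t • g) z) Set.univ := by
    refine LipschitzOnWith.of_dist_le_mul fun s _ t _ => ?_
    calc dist (F (f + s • g) z) (F (f + t • g) z)
        ≤ C z * ‖(f + s • g) - (f + t • g)‖ := by rw [dist_eq_norm]; exact hF_lip z _ _
      _ = C z * ‖g‖ * dist s t := by
        rw [add_sub_add_left_eq_sub, ← sub_smul, norm_smul, dist_eq_norm]; ring
      _ ≤ Real.nnabs (C z * ‖g‖) * dist s t := by
        rw [Real.coe_nnabs]; gcongr; exact le_abs_self _
  exact (hasDerivAt_integral_of_dominated_loc_of_lip Filter.univ_mem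
    (Filter.Eventually.of_forall fun t => hF_meas (f + t • g)) (by simpa using hF_int)
    (aestronglyMeasurable_of_hasLineDerivAt hF_meas hF_deriv)
    (ae_of_all μ lipschitz_on_line) (hC_int.mul_const ‖g‖) (ae_of_all μ hF_deriv)).2

end LineDeriv

section Inner

variable {H : Type*} [NormedAddCommGroup H] [InnerProductSpace ℝ H] {ℓ : ℝ → ℝ → ℝ}

lemma hasLineDerivAt_const_mul_norm_sq (l : ℝ) (f g : H) :
    HasLineDerivAt ℝ (fun f : H => l * ‖f‖ ^ 2) (2 * l * ⟪f, g⟫) f g := by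
  convert ((hasStrictFDerivAt_norm_sq f).hasFDerivAt.const_mul l).hasLineDerivAt g using 1
  simp only [smul_apply, innerSL_apply_apply, smul_eq_mul, nsmul_eq_mul]
  push_cast
  ring

lemma abs_comp_inner_sub_le {K : ℝ}
    (hℓ : ∀ t₁ t₂ s₁ s₂, |ℓ t₁ t₂ - ℓ s₁ s₂| ≤ K * (|t₁ - s₁| + |t₂ - s₂|)) (u v f g : H) :
    |ℓ ⟪f, u⟫ ⟪f, v⟫ - ℓ ⟪g, u⟫ ⟪g, v⟫| ≤ K * (‖u‖ + ‖v‖) * ‖f - g‖ := by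
  have hK : 0 ≤ K := by simpa using (abs_nonneg _).trans (hℓ 1 0 0 0)
  have eval_le (w : H) : |⟪f, w⟫ - ⟪g, w⟫| ≤ ‖f - g‖ * ‖w‖ := by
    rw [← inner_sub_left]; exact abs_real_inner_le_norm _ _
  calc |ℓ ⟪f, u⟫ ⟪f, v⟫ - ℓ ⟪g, u⟫ ⟪g, v⟫|
      ≤ K * (|⟪f, u⟫ - ⟪g, u⟫| + |⟪f, v⟫ - ⟪g, v⟫|) := hℓ _ _ _ _
    _ ≤ K * (‖f - g‖ * ‖u‖ + ‖f - g‖ * ‖v‖) := by gcongr <;> exact eval_le _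
    _ = K * (‖u‖ + ‖v‖) * ‖f - g‖ := by ring

lemma hasLineDerivAt_comp_inner {a b : ℝ} {u v f : H}
    (hℓ : HasFDerivAt (fun p : ℝ × ℝ => ℓ p.1 p.2)
      (a • ContinuousLinearMap.fst ℝ ℝ ℝ + b • ContinuousLinearMap.snd ℝ ℝ ℝ)
      (⟪f, u⟫, ⟪f, v⟫)) (g : H) :
    HasLineDerivAt ℝ (fun f => ℓ ⟪f, u⟫ ⟪f, v⟫) (a * ⟪g, u⟫ + b * ⟪g, v⟫) f g := by
  let eval : H →L[ℝ] ℝ × ℝ := (innerSLFlip ℝ u).prod (innerSLFlip ℝ v)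
  exact (hℓ.comp (f := eval) f eval.hasFDerivAt).hasLineDerivAt g

end Inner

section ShiftedRisk

variable {X : Type*} {Y : Set ℝ} {H : Type*} [NormedAddCommGroup H] [InnerProductSpace ℝ H]
  {L D₅L D₆L : X → Y → X → Y → ℝ → ℝ → ℝ} {Φ : X → H} {L₁ : ℝ}

/-- The shifted loss `L★(x, y, x̃, ỹ, f(x), f(x̃))` of the function `f(x) = ⟪f, Φ x⟫` at a pair of
observations `z = ((x, y), (x̃, ỹ))`; it is the integrand of `shiftedRisk`. -/
def shiftedLoss (L : X → Y → X → Y → ℝ → ℝ → ℝ) (Φ : X → H) (f : H)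
    (z : (X × Y) × (X × Y)) : ℝ :=
  L z.1.1 z.1.2 z.2.1 z.2.2 ⟪f, Φ z.1.1⟫ ⟪f, Φ z.2.1⟫ - L z.1.1 z.1.2 z.2.1 z.2.2 0 0

lemma abs_shiftedLoss_sub_le
    (hLip : ∀ x y x' y' t₁ t₂ s₁ s₂,
      |L x y x' y' t₁ t₂ - L x y x' y' s₁ s₂| ≤ L₁ * (|t₁ - s₁| + |t₂ - s₂|))
    (z : (X × Y) × (X × Y)) (f g : H) :
    |shiftedLoss L Φ f z - shiftedLoss L Φ g z|
      ≤ L₁ * (‖Φ z.1.1‖ + ‖Φ z.2.1‖) * ‖f - g‖ := by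
  rw [shiftedLoss, shiftedLoss, sub_sub_sub_cancel_right]
  exact abs_comp_inner_sub_le (hLip _ _ _ _) _ _ f g

lemma shiftedLoss_zero : shiftedLoss L Φ 0 = 0 := by
  ext z
  simp [shiftedLoss]

variable [MeasurableSpace X] {P : Measure (X × Y)}

lemma measurable_shiftedLoss
    (hL_meas : Measurable fun p : (X × Y) × (X × Y) × ℝ × ℝ =>
      L p.1.1 p.1.2 p.2.1.1 p.2.1.2 p.2.2.1 p.2.2.2)
    {f : H} (hf : Measurable fun x => ⟪f, Φ x⟫) :
    Measurable (shiftedLoss L Φ f) := by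
  have loss_comp {u v : (X × Y) × (X × Y) → ℝ} (hu : Measurable u) (hv : Measurable v) :
      Measurable fun z => L z.1.1 z.1.2 z.2.1 z.2.2 (u z) (v z) :=
    hL_meas.comp (measurable_fst.prodMk (measurable_snd.prodMk (hu.prodMk hv)))
  exact (loss_comp (hf.comp measurable_fst.fst) (hf.comp measurable_snd.fst)).sub
    (loss_comp measurable_const measurable_const)

lemma hasLineDerivAt_shiftedRisk [IsFiniteMeasure P]
    (hL_meas : Measurable fun p : (X × Y) × (X × Y) × ℝ × ℝ =>
      L p.1.1 p.1.2 p.2.1.1 p.2.1.2 p.2.2.1 p.2.2.2)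
    (hLip : ∀ x y x' y' t₁ t₂ s₁ s₂,
      |L x y x' y' t₁ t₂ - L x y x' y' s₁ s₂| ≤ L₁ * (|t₁ - s₁| + |t₂ - s₂|))
    (hderiv : ∀ x y x' y' t t', HasFDerivAt (fun p : ℝ × ℝ => L x y x' y' p.1 p.2)
      ((D₅L x y x' y' t t') • ContinuousLinearMap.fst ℝ ℝ ℝ
        + (D₆L x y x' y' t t') • ContinuousLinearMap.snd ℝ ℝ ℝ) (t, t'))
    (hΦ_meas : ∀ f : H, Measurable fun x => ⟪f, Φ x⟫)
    (hΦ_int : Integrable (fun z : X × Y => ‖Φ z.1‖) P) (f g : H) :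
    HasLineDerivAt ℝ (shiftedRisk L Φ P)
      (∫ z : (X × Y) × (X × Y),
        (D₅L z.1.1 z.1.2 z.2.1 z.2.2 ⟪f, Φ z.1.1⟫ ⟪f, Φ z.2.1⟫ * ⟪g, Φ z.1.1⟫
          + D₆L z.1.1 z.1.2 z.2.1 z.2.2 ⟪f, Φ z.1.1⟫ ⟪f, Φ z.2.1⟫ * ⟪g, Φ z.2.1⟫)
        ∂(P.prod P)) f g := by
  have loss_meas (f : H) : AEStronglyMeasurable (shiftedLoss L Φ f) (P.prod P) :=
    (measurable_shiftedLoss hL_meas (hΦ_meas f)).aestronglyMeasurable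
  have lipschitz_const_int : Integrable
      (fun z : (X × Y) × (X × Y) => L₁ * (‖Φ z.1.1‖ + ‖Φ z.2.1‖)) (P.prod P) :=
    ((hΦ_int.comp_fst P).add (hΦ_int.comp_snd P)).const_mul L₁
  have loss_int : Integrable (shiftedLoss L Φ f) (P.prod P) :=
    (lipschitz_const_int.mul_const ‖f‖).mono' (loss_meas f) <| ae_of_all _ fun z => by
      simpa [shiftedLoss_zero] using abs_shiftedLoss_sub_le (Φ := Φ) hLip z f 0
  exact hasLineDerivAt_integral_of_lipschitz loss_meas loss_int lipschitz_const_int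
    (abs_shiftedLoss_sub_le hLip)
    fun z => (hasLineDerivAt_comp_inner (hderiv _ _ _ _ _ _) g).sub_const _

theorem rpl_first_order_condition_general [IsFiniteMeasure P]
    (hL_meas : Measurable fun p : (X × Y) × (X × Y) × ℝ × ℝ =>
      L p.1.1 p.1.2 p.2.1.1 p.2.1.2 p.2.2.1 p.2.2.2)
    (hLip : ∀ x y x' y' t₁ t₂ s₁ s₂,
      |L x y x' y' t₁ t₂ - L x y x' y' s₁ s₂| ≤ L₁ * (|t₁ - s₁| + |t₂ - s₂|))
    (hderiv : ∀ x y x' y' t t', HasFDerivAt (fun p : ℝ × ℝ => L x y x' y' p.1 p.2)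
      ((D₅L x y x' y' t t') • ContinuousLinearMap.fst ℝ ℝ ℝ
        + (D₆L x y x' y' t t') • ContinuousLinearMap.snd ℝ ℝ ℝ) (t, t'))
    (hΦ_meas : ∀ f : H, Measurable fun x => ⟪f, Φ x⟫)
    (hΦ_int : Integrable (fun z : X × Y => ‖Φ z.1‖) P)
    {l : ℝ} {fmin : H} (hfmin : IsLocalMin (fun f => shiftedRisk L Φ P f + l * ‖f‖ ^ 2) fmin)
    (g : H) :
    (∫ z : (X × Y) × (X × Y),
      (D₅L z.1.1 z.1.2 z.2.1 z.2.2 ⟪fmin, Φ z.1.1⟫ ⟪fmin, Φ z.2.1⟫ * ⟪g, Φ z.1.1⟫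
        + D₆L z.1.1 z.1.2 z.2.1 z.2.2 ⟪fmin, Φ z.1.1⟫ ⟪fmin, Φ z.2.1⟫ * ⟪g, Φ z.2.1⟫)
      ∂(P.prod P))
    + 2 * l * ⟪fmin, g⟫ = 0 :=
  hfmin.hasLineDerivAt_eq_zero <|
    (hasLineDerivAt_shiftedRisk hL_meas hLip hderiv hΦ_meas hΦ_int fmin g).add
      (hasLineDerivAt_const_mul_norm_sq l fmin g)

end ShiftedRisk

/-- **First-order condition for the RPL minimizer.** Under Assumption 1 of the paper, any
minimizer `fmin` of the regularized shifted risk satisfies, for every `g ∈ H`,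
`∫ [D₅L(…,fmin(x),fmin(x̃)) g(x) + D₆L(…,fmin(x),fmin(x̃)) g(x̃)] dP² + 2λ⟪fmin, g⟫_H = 0`. -/
theorem rpl_first_order_condition
    {X : Type*} [MeasurableSpace X] [MetricSpace X] [CompleteSpace X]
    [TopologicalSpace.SeparableSpace X] [BorelSpace X]
    {Y : Set ℝ} (hY : IsClosed Y)
    (L D₅L D₆L D₅₅L D₅₆L D₆₅L D₆₆L : X → Y → X → Y → ℝ → ℝ → ℝ)
    (hL_nonneg : ∀ x y x' y' t t', 0 ≤ L x y x' y' t t')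
    (hL_meas : Measurable fun p : (X × Y) × (X × Y) × ℝ × ℝ =>
      L p.1.1 p.1.2 p.2.1.1 p.2.1.2 p.2.2.1 p.2.2.2)
    (L₁ : ℝ) (hL₁ : 0 ≤ L₁)
    (hLip : ∀ x y x' y' t₁ t₂ s₁ s₂,
      |L x y x' y' t₁ t₂ - L x y x' y' s₁ s₂| ≤ L₁ * (|t₁ - s₁| + |t₂ - s₂|))
    (hderiv : ∀ x y x' y' t t', HasFDerivAt (fun p : ℝ × ℝ => L x y x' y' p.1 p.2)
      ((D₅L x y x' y' t t') • ContinuousLinearMap.fst ℝ ℝ ℝ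
        + (D₆L x y x' y' t t') • ContinuousLinearMap.snd ℝ ℝ ℝ) (t, t'))
    (hderiv₅ : ∀ x y x' y' t t', HasFDerivAt (fun p : ℝ × ℝ => D₅L x y x' y' p.1 p.2)
      ((D₅₅L x y x' y' t t') • ContinuousLinearMap.fst ℝ ℝ ℝ
        + (D₆₅L x y x' y' t t') • ContinuousLinearMap.snd ℝ ℝ ℝ) (t, t'))
    (hderiv₆ : ∀ x y x' y' t t', HasFDerivAt (fun p : ℝ × ℝ => D₆L x y x' y' p.1 p.2)
      ((D₅₆L x y x' y' t t') • ContinuousLinearMap.fst ℝ ℝ ℝ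
        + (D₆₆L x y x' y' t t') • ContinuousLinearMap.snd ℝ ℝ ℝ) (t, t'))
    (hcont₁ : ∀ x y x' y', Continuous (fun p : ℝ × ℝ => D₅L x y x' y' p.1 p.2) ∧
      Continuous (fun p : ℝ × ℝ => D₆L x y x' y' p.1 p.2))
    (hcont₂ : ∀ x y x' y', Continuous (fun p : ℝ × ℝ => D₅₅L x y x' y' p.1 p.2) ∧
      Continuous (fun p : ℝ × ℝ => D₅₆L x y x' y' p.1 p.2) ∧
      Continuous (fun p : ℝ × ℝ => D₆₅L x y x' y' p.1 p.2) ∧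
      Continuous (fun p : ℝ × ℝ => D₆₆L x y x' y' p.1 p.2))
    (cL₁ cL₂ : ℝ) (hcL₁ : 0 < cL₁) (hcL₂ : 0 < cL₂)
    (hbd₁ : ∀ x y x' y' t t', |D₅L x y x' y' t t'| ≤ cL₁ ∧ |D₆L x y x' y' t t'| ≤ cL₁)
    (hbd₂ : ∀ x y x' y' t t', |D₅₅L x y x' y' t t'| ≤ cL₂ ∧ |D₅₆L x y x' y' t t'| ≤ cL₂ ∧
      |D₆₅L x y x' y' t t'| ≤ cL₂ ∧ |D₆₆L x y x' y' t t'| ≤ cL₂)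
    (hzero : ∀ (x : X) (y : Y) (t : ℝ), L x y x y t t = 0)
    {H : Type*} [NormedAddCommGroup H] [InnerProductSpace ℝ H] [CompleteSpace H]
    (Φ : X → H) (hΦcont : Continuous Φ) (κ : ℝ) (hκ : ∀ x, ‖Φ x‖ ≤ κ)
    (P : Measure (X × Y)) [IsProbabilityMeasure P]
    (l : ℝ) (hl : 0 < l)
    (fmin : H)
    (hfmin : ∀ g : H, shiftedRisk L Φ P fmin + l * ‖fmin‖ ^ 2
      ≤ shiftedRisk L Φ P g + l * ‖g‖ ^ 2) :
    ∀ g : H,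
      (∫ z : (X × Y) × (X × Y),
        (D₅L z.1.1 z.1.2 z.2.1 z.2.2 ⟪fmin, Φ z.1.1⟫ ⟪fmin, Φ z.2.1⟫ * ⟪g, Φ z.1.1⟫
          + D₆L z.1.1 z.1.2 z.2.1 z.2.2 ⟪fmin, Φ z.1.1⟫ ⟪fmin, Φ z.2.1⟫ * ⟪g, Φ z.2.1⟫)
        ∂(P.prod P))
      + 2 * l * ⟪fmin, g⟫ = 0 := by
  have norm_int : Integrable (fun z : X × Y => ‖Φ z.1‖) P :=
    .of_bound (hΦcont.norm.measurable.comp measurable_fst).aestronglyMeasurable κ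
      (ae_of_all P fun z => (norm_norm (Φ z.1)).trans_le (hκ z.1))
  exact rpl_first_order_condition_general hL_meas hLip hderiv
    (fun _ => (continuous_const.inner hΦcont).measurable) norm_int (.of_forall hfmin)
end
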